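/- The generic tournament is indivisible: let T : ℕ → ℕ → Prop be a tournament (for all distinct x, y exactly one of T x y, T y x holds, and T x x never holds) such that for all disjoint finite sets A, B ⊆ ℕ there exists v ∉ A ∪ B with T v a for every a ∈ A and T b v for every b ∈ B. Then for every k ≥ 1 and every coloring c : ℕ → {0, …, k−1}, there exists an injection f : ℕ → ℕ such that for all x, y ∈ ℕ, T (f x) (f y) if and only if T x y, and c ∘ f is constant. -/

import Mathlib

/-!
Some color class itself satisfies the extension property. Otherwise every class `S i` contains
disjoint finite sets `A i`, `B i` which no vertex of `S i` realizes; as distinct classes are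
disjoint, the unions `⋃ A i` and `⋃ B i` are again disjoint, and a vertex realizing them in `T`
has some color `j`, hence is a vertex of `S j` realizing `A j`, `B j`, a contradiction.
Within a color class having the extension property, a copy of `T` is built vertex by vertex
(`greedySeq`).
-/

open Classical in
/-- The sequence whose `n`-th term is `g A B`, where `A` consists of the images of the earlier
vertices that `n` beats in `T`, and `B` of the images of the other earlier vertices. -/
noncomputable def greedySeq (T : ℕ → ℕ → Prop) (g : Finset ℕ → Finset ℕ → ℕ) : ℕ → ℕ
  | n => g ((Finset.univ.filter fun m : Fin n => T n m).image fun m => greedySeq T g m.1)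
      ((Finset.univ.filter fun m : Fin n => ¬ T n m).image fun m => greedySeq T g m.1)
termination_by n => n
decreasing_by all_goals exact m.2

/-- A set of vertices with the extension property contains a copy of `T`. -/
theorem exists_embedding_of_extension
    (T : ℕ → ℕ → Prop)
    (htour : ∀ x y : ℕ, x ≠ y → (T x y ↔ ¬ T y x))
    (hirr : ∀ x : ℕ, ¬ T x x) (S : Set ℕ)
    (hS : ∀ A B : Finset ℕ, (∀ a ∈ A, a ∈ S) → (∀ b ∈ B, b ∈ S) → Disjoint A B →
      ∃ v ∈ S, (∀ a ∈ A, T v a) ∧ (∀ b ∈ B, T b v)) :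
    ∃ f : ℕ → ℕ, Function.Injective f ∧ (∀ x y : ℕ, T (f x) (f y) ↔ T x y) ∧
      ∀ x, f x ∈ S := by
  classical
  have hS' : ∀ A B : Finset ℕ, ∃ v, (∀ a ∈ A, a ∈ S) → (∀ b ∈ B, b ∈ S) → Disjoint A B →
      v ∈ S ∧ (∀ a ∈ A, T v a) ∧ (∀ b ∈ B, T b v) := by
    intro A B
    by_cases h : (∀ a ∈ A, a ∈ S) ∧ (∀ b ∈ B, b ∈ S) ∧ Disjoint A B
    · obtain ⟨v, hv⟩ := hS A B h.1 h.2.1 h.2.2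
      exact ⟨v, fun _ _ _ => hv⟩
    · exact ⟨0, fun h1 h2 h3 => absurd ⟨h1, h2, h3⟩ h⟩
  choose g hg using hS'
  set f := greedySeq T g with hf
  have ne_of : ∀ {x y}, T x y → x ≠ y := by
    rintro x y h rfl
    exact hirr x h
  have key : ∀ n, f n ∈ S ∧ ∀ m < n, (T n m → T (f n) (f m)) ∧ (¬ T n m → T (f m) (f n)) := by
    intro n
    induction n using Nat.strong_induction_on with
    | _ n ih =>
      have inj : ∀ a < n, ∀ b < a, f a ≠ f b := by
        intro a ha b hb
        by_cases h : T a b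
        · exact ne_of (((ih a ha).2 b hb).1 h)
        · exact (ne_of (((ih a ha).2 b hb).2 h)).symm
      have inj' : ∀ a < n, ∀ b < n, f a = f b → a = b := by
        intro a ha b hb hab
        rcases lt_trichotomy a b with h | h | h
        · exact absurd hab.symm (inj b hb a h)
        · exact h
        · exact absurd hab (inj a ha b h)
      have h := hg ((Finset.univ.filter fun m : Fin n => T n m).image fun m => f m.1)
        ((Finset.univ.filter fun m : Fin n => ¬ T n m).image fun m => f m.1)
        (by
          intro a ha
          obtain ⟨m, -, rfl⟩ := Finset.mem_image.1 ha
          exact (ih m m.2).1)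
        (by
          intro a ha
          obtain ⟨m, -, rfl⟩ := Finset.mem_image.1 ha
          exact (ih m m.2).1)
        (by
          rw [Finset.disjoint_left]
          intro a ha hb
          obtain ⟨m, hm, rfl⟩ := Finset.mem_image.1 ha
          obtain ⟨m', hm', he⟩ := Finset.mem_image.1 hb
          have := inj' _ m'.2 _ m.2 he
          rw [Finset.mem_filter] at hm hm'
          exact hm'.2 (this ▸ hm.2))
      have hfn : f n = g ((Finset.univ.filter fun m : Fin n => T n m).image fun m => f m.1)
          ((Finset.univ.filter fun m : Fin n => ¬ T n m).image fun m => f m.1) := by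
        rw [hf, greedySeq]
      rw [← hfn] at h
      refine ⟨h.1, fun m hm => ⟨fun hT => h.2.1 _ ?_, fun hT => h.2.2 _ ?_⟩⟩
      · exact Finset.mem_image.2 ⟨⟨m, hm⟩, by simpa using hT, rfl⟩
      · exact Finset.mem_image.2 ⟨⟨m, hm⟩, by simpa using hT, rfl⟩
  have fwd : ∀ x y, T x y → T (f x) (f y) := by
    intro x y h
    rcases lt_trichotomy x y with hlt | heq | hlt
    · exact ((key y).2 x hlt).2 ((htour x y (ne_of h)).1 h)
    · exact absurd heq (ne_of h)
    · exact ((key x).2 y hlt).1 h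
  have total : ∀ {x y}, x ≠ y → ¬ T x y → T y x := fun hne h =>
    (htour _ _ hne.symm).2 h
  refine ⟨f, ?_, ?_, fun x => (key x).1⟩
  · intro x y hxy
    by_contra hne
    by_cases h : T x y
    · exact ne_of (fwd x y h) hxy
    · exact ne_of (fwd y x (total hne h)) hxy.symm
  · refine fun x y => ⟨fun h => ?_, fwd x y⟩
    by_contra hn
    have hne : x ≠ y := by
      rintro rfl
      exact hirr _ h
    exact (htour _ _ (ne_of h)).1 h (fwd y x (total hne hn))

/-- The generic tournament is indivisible: if `T` is a tournament on `ℕ` (for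
distinct `x`, `y` exactly one of `T x y`, `T y x` holds, and never `T x x`) such that for all
disjoint finite `A`, `B` there is `v` outside `A ∪ B` with `T v a` for all `a ∈ A` and
`T b v` for all `b ∈ B`, then every finite coloring of `ℕ` is constant on the image of some
self-embedding of `T`. -/
theorem genericTournament_indivisible
    (T : ℕ → ℕ → Prop)
    (htour : ∀ x y : ℕ, x ≠ y → (T x y ↔ ¬ T y x))
    (hirr : ∀ x : ℕ, ¬ T x x)
    (hext : ∀ A B : Finset ℕ, Disjoint A B →
      ∃ v : ℕ, v ∉ A ∧ v ∉ B ∧ (∀ a ∈ A, T v a) ∧ (∀ b ∈ B, T b v)) :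
    ∀ k : ℕ, 1 ≤ k → ∀ c : ℕ → Fin k,
      ∃ f : ℕ → ℕ, Function.Injective f ∧
        (∀ x y : ℕ, T (f x) (f y) ↔ T x y) ∧
        ∃ i : Fin k, ∀ x : ℕ, c (f x) = i := by
  intro k _ c
  classical
  suffices h : ∃ i : Fin k, ∀ A B : Finset ℕ, (∀ a ∈ A, c a = i) → (∀ b ∈ B, c b = i) →
      Disjoint A B → ∃ v, c v = i ∧ (∀ a ∈ A, T v a) ∧ (∀ b ∈ B, T b v) by
    obtain ⟨i, hi⟩ := h
    obtain ⟨f, h1, h2, h3⟩ := exists_embedding_of_extension T htour hirr {x | c x = i} hi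
    exact ⟨f, h1, h2, i, h3⟩
  by_contra! hcon
  choose A B hA hB hAB hno using hcon
  obtain ⟨v, -, -, hvA, hvB⟩ := hext (Finset.univ.biUnion A) (Finset.univ.biUnion B) (by
    rw [Finset.disjoint_left]
    intro x hx hy
    obtain ⟨i, -, hi⟩ := Finset.mem_biUnion.1 hx
    obtain ⟨j, -, hj⟩ := Finset.mem_biUnion.1 hy
    obtain rfl : i = j := (hA i x hi).symm.trans (hB j x hj)
    exact Finset.disjoint_left.1 (hAB i) hi hj)
  obtain ⟨b, hb, hbv⟩ := hno (c v) v rfl fun a ha =>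
    hvA a (Finset.mem_biUnion.2 ⟨_, Finset.mem_univ _, ha⟩)
  exact hbv (hvB b (Finset.mem_biUnion.2 ⟨_, Finset.mem_univ _, hb⟩))
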